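/- arXiv:1911.10852 — 4 statements merged into one kernel-verified Lean document; each statement's English description precedes it below -/
import Mathlib

section
/- Let α > 0 and let a, b, c be real numbers. Set d = ac − b², τ = a + c, D = √((1−d)² + τ²), C = (1−d)/D and S = −τ/D. Let A : ℝ → ℝ be a smooth 1-periodic function with ∫₀¹ A(x) dx = −α·D. Then there exists a smooth 1-periodic function φ : ℝ → ℝ with 1 + φ''(x) > 0 for all x, such that for all x ∈ ℝ: −(1/4)·(d²/dx²)(1/(1+φ''(x))) − α·b²·(1+φ''(x))/(C − c·S) + α·(c²+1)/(c·S − C) = A(x). -/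
/-!
Writing `v = 1 / (1 + φ'')`, the equation becomes `v'' = h - k / v` with `k ≥ 0`, and the
integral condition on `A` becomes `∫ h = k`. A positive periodic solution `v` with `∫ 1 / v = 1`
then gives `φ` by integrating `1 / v - 1` twice.

For `k > 0` the right-hand side is increasing in `v`, so ordered periodic sub- and supersolutions
trap every solution: a small constant is a subsolution, and if `H'' = h - k` then `H + C` is a
supersolution for large `C`. Replacing `-k / v` outside the trapping interval by a function whose
slopes lie in some `[δ, M]` with `δ > 0` turns `-v'' + M v = M v - f(x, v)` into a contraction, and
`∫ 1 / v = 1` follows by integrating the equation. For `k = 0` the solutions are `v = H + s`; the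
integral of `1 / v` varies continuously with `s` and blows up as `min v → 0`, because `H` is
Lipschitz, so some `s` normalizes it.
-/

open Set Filter Topology
open Function (Periodic)
open scoped ContDiff

variable {T : ℝ}

section PeriodicFunctions

lemma exists_forall_le_of_periodic {f : ℝ → ℝ} (hf : Continuous f) (hp : Periodic f T)
    (hT : T ≠ 0) : ∃ x₀, ∀ x, f x₀ ≤ f x := by
  obtain ⟨_, ⟨x₀, rfl⟩, hx₀⟩ :=
    (hp.compact_of_continuous hT hf).exists_isLeast (range_nonempty f)
  exact ⟨x₀, fun x => hx₀ (mem_range_self x)⟩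

lemma exists_abs_le_of_periodic {f : ℝ → ℝ} (hf : Continuous f) (hp : Periodic f T)
    (hT : T ≠ 0) : ∃ K, 0 < K ∧ ∀ x, |f x| ≤ K := by
  obtain ⟨K, hK₀, hK⟩ := (hp.isBounded_of_continuous hT hf).exists_pos_norm_le
  exact ⟨K, hK₀, fun x => hK _ (mem_range_self x)⟩

lemma periodic_deriv {f : ℝ → ℝ} (hp : Periodic f T) : Periodic (deriv f) T := fun x => by
  rw [← deriv_comp_add_const, hp.funext]

lemma exists_periodic_primitive {f : ℝ → ℝ} (hf : Continuous f) (hp : Periodic f T) (hT : T ≠ 0)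
    (hint : ∫ x in 0..T, f x = 0) :
    ∃ F : ℝ → ℝ, (∀ x, HasDerivAt F (f x) x) ∧ Periodic F T ∧ ∫ x in 0..T, F x = 0 := by
  let G : ℝ → ℝ := fun x => ∫ t in 0..x, f t
  have hG x : HasDerivAt G (f x) x := (hf.integral_hasStrictDerivAt 0 x).hasDerivAt
  have hGc : Continuous G := continuous_iff_continuousAt.2 fun x => (hG x).continuousAt
  have hGp : Periodic G T := fun x => by
    simp only [G]
    rw [hp.intervalIntegral_add_eq_add 0 x fun _ _ => hf.intervalIntegrable _ _, zero_add, hint,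
      add_zero]
  refine ⟨fun x => G x - (∫ t in 0..T, G t) / T, fun x => (hG x).sub_const _,
    fun x => by simp only [hGp x], ?_⟩
  rw [intervalIntegral.integral_sub (hGc.intervalIntegrable _ _) (by simp),
    intervalIntegral.integral_const, sub_zero, smul_eq_mul, mul_div_cancel₀ _ hT, sub_self]

lemma mul_integral_add_eq_of_forall_mul_eq {g : ℝ → ℝ} {q : ℝ} (hg : Continuous g)
    (hq : ∀ x, q * g (x + T) = g x) (x : ℝ) :
    q * ∫ t in 0..x + T, g t = q * (∫ t in 0..T, g t) + ∫ t in 0..x, g t := by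
  have hshift : q * ∫ t in T..x + T, g t = ∫ t in 0..x, g t :=
    calc
      _ = q * ∫ t in 0..x, g (t + T) := by
        rw [intervalIntegral.integral_comp_add_right, zero_add]
      _ = _ := by simp only [← intervalIntegral.integral_const_mul, hq]
  rw [← hshift, ← mul_add, intervalIntegral.integral_add_adjacent_intervals
    (hg.intervalIntegrable 0 T) (hg.intervalIntegrable T (x + T))]

lemma exists_periodic_hasDerivAt_linear {m : ℝ} {f : ℝ → ℝ} (hf : Continuous f)
    (hp : Periodic f T) (hT : T ≠ 0) (hm : m ≠ 0) :
    ∃ p : ℝ → ℝ, Periodic p T ∧ ∀ x, HasDerivAt p (m * p x + f x) x := by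
  let E : ℝ → ℝ := fun x => Real.exp (m * x)
  let g : ℝ → ℝ := fun x => Real.exp (-(m * x)) * f x
  have hg : Continuous g := by fun_prop
  have hE_add x y : E (x + y) = E x * E y := by simp only [E, mul_add, Real.exp_add]
  have hEg x : E x * g x = f x := by
    simp only [E, g, ← mul_assoc, ← Real.exp_add, add_neg_cancel, Real.exp_zero, one_mul]
  have hg_add x : E T * g (x + T) = g x := by
    simp only [E, g, hp x, ← mul_assoc, ← Real.exp_add]
    ring_nf
  have hET : 1 - E T ≠ 0 := by
    rw [sub_ne_zero, ne_comm, Ne, Real.exp_eq_one_iff]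
    exact mul_ne_zero hm hT
  let I : ℝ → ℝ := fun x => ∫ t in 0..x, g t
  have hI_add x : E T * I (x + T) = E T * I T + I x :=
    mul_integral_add_eq_of_forall_mul_eq hg hg_add x
  -- Periodicity of `E (c + I)` amounts to `E T * (c + I T) = c`.
  let c : ℝ := E T * I T / (1 - E T)
  have hc : E T * (c + I T) = c := by
    simp only [c]
    field_simp
    ring
  refine ⟨fun x => E x * (c + I x), fun x => ?_, fun x => ?_⟩
  · simp only [hE_add]
    linear_combination E x * hI_add x + E x * hc
  · have hE : HasDerivAt E (E x * m) x := by
      simpa using ((hasDerivAt_id x).const_mul m).exp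
    have hI : HasDerivAt I (g x) x := (hg.integral_hasStrictDerivAt 0 x).hasDerivAt
    refine (hE.mul (hI.const_add c)).congr_deriv ?_
    linear_combination hEg x

end PeriodicFunctions

/-- `u` is a `T`-periodic function, twice differentiable on `ℝ`, with second derivative `g`.
Taking `g` to depend on `u` expresses that `u` is a periodic solution of a second-order equation. -/
structure HasPeriodicSecondDeriv (T : ℝ) (u g : ℝ → ℝ) : Prop where
  periodic : Periodic u T
  differentiable : Differentiable ℝ u
  hasDerivAt_deriv : ∀ x, HasDerivAt (deriv u) (g x) x

namespace HasPeriodicSecondDeriv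

variable {u v g g₁ g₂ : ℝ → ℝ}

lemma of_hasDerivAt {u' : ℝ → ℝ} (hp : Periodic u T) (hu : ∀ x, HasDerivAt u (u' x) x)
    (hu' : ∀ x, HasDerivAt u' (g x) x) : HasPeriodicSecondDeriv T u g := by
  refine ⟨hp, fun x => (hu x).differentiableAt, ?_⟩
  rwa [funext fun x => (hu x).deriv]

lemma continuous (hu : HasPeriodicSecondDeriv T u g) : Continuous u :=
  hu.differentiable.continuous

lemma continuous_deriv (hu : HasPeriodicSecondDeriv T u g) : Continuous (deriv u) :=
  continuous_iff_continuousAt.2 fun x => (hu.hasDerivAt_deriv x).continuousAt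

lemma deriv_deriv (hu : HasPeriodicSecondDeriv T u g) : deriv (deriv u) = g :=
  funext fun x => (hu.hasDerivAt_deriv x).deriv

lemma const (T c : ℝ) : HasPeriodicSecondDeriv T (fun _ => c) fun _ => 0 :=
  of_hasDerivAt (fun _ => rfl) (fun x => hasDerivAt_const x c) fun x => hasDerivAt_const x 0

lemma add_const (hu : HasPeriodicSecondDeriv T u g) (c : ℝ) :
    HasPeriodicSecondDeriv T (fun x => u x + c) g :=
  of_hasDerivAt (fun x => by simp only [hu.periodic x])
    (fun x => (hu.differentiable x).hasDerivAt.add_const c) hu.hasDerivAt_deriv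

lemma sub (hu : HasPeriodicSecondDeriv T u g₁) (hv : HasPeriodicSecondDeriv T v g₂) :
    HasPeriodicSecondDeriv T (fun x => u x - v x) fun x => g₁ x - g₂ x :=
  of_hasDerivAt (fun x => by simp only [hu.periodic x, hv.periodic x])
    (fun x => (hu.differentiable x).hasDerivAt.sub (hv.differentiable x).hasDerivAt)
    fun x => (hu.hasDerivAt_deriv x).sub (hv.hasDerivAt_deriv x)

lemma integral_eq_zero (hu : HasPeriodicSecondDeriv T u g) (hg : Continuous g) :
    ∫ x in 0..T, g x = 0 := by
  rw [intervalIntegral.integral_eq_sub_of_hasDerivAt (fun x _ => hu.hasDerivAt_deriv x)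
    (hg.intervalIntegrable 0 T), (periodic_deriv hu.periodic).eq, sub_self]

lemma exists_abs_sub_le (hu : HasPeriodicSecondDeriv T u g) (hT : T ≠ 0) :
    ∃ L, 0 < L ∧ ∀ x y, |u y - u x| ≤ L * |y - x| := by
  obtain ⟨L, hL₀, hL⟩ :=
    exists_abs_le_of_periodic hu.continuous_deriv (periodic_deriv hu.periodic) hT
  exact ⟨L, hL₀, fun x y => convex_univ.norm_image_sub_le_of_norm_deriv_le
    (fun z _ => hu.differentiable z) (fun z _ => hL z) (mem_univ x) (mem_univ y)⟩

lemma contDiff (hu : HasPeriodicSecondDeriv T u g)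
    (bootstrap : ∀ n : ℕ, ContDiff ℝ n u → ContDiff ℝ n g) : ContDiff ℝ ∞ u := by
  have regularity (n : ℕ) : ContDiff ℝ n u ∧ ContDiff ℝ n (deriv u) := by
    induction n with
    | zero => exact ⟨contDiff_zero.2 hu.continuous, contDiff_zero.2 hu.continuous_deriv⟩
    | succ n ih =>
      push_cast
      rw [contDiff_succ_iff_deriv, contDiff_succ_iff_deriv, hu.deriv_deriv]
      exact ⟨⟨hu.differentiable, by simp, ih.2⟩,
        fun x => (hu.hasDerivAt_deriv x).differentiableAt, by simp, bootstrap n ih.1⟩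
  exact contDiff_infty.2 fun n => (regularity n).1

end HasPeriodicSecondDeriv

section LinearEquations

lemma exists_hasPeriodicSecondDeriv {f : ℝ → ℝ} (hf : Continuous f) (hp : Periodic f T)
    (hT : T ≠ 0) (hint : ∫ x in 0..T, f x = 0) : ∃ u, HasPeriodicSecondDeriv T u f := by
  obtain ⟨F, hF, hFp, hF₀⟩ := exists_periodic_primitive hf hp hT hint
  have hFc : Continuous F := continuous_iff_continuousAt.2 fun x => (hF x).continuousAt
  obtain ⟨u, hu, hup, -⟩ := exists_periodic_primitive hFc hFp hT hF₀
  exact ⟨u, .of_hasDerivAt hup hu hF⟩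

lemma exists_hasPeriodicSecondDeriv_mul_sub {M : ℝ} {f : ℝ → ℝ} (hf : Continuous f)
    (hp : Periodic f T) (hT : T ≠ 0) (hM : 0 < M) :
    ∃ w, HasPeriodicSecondDeriv T w fun x => M * w x - f x := by
  -- With `m ^ 2 = M`, the operator `w'' - M w` factors as `(d/dx + m) (d/dx - m) w`.
  have hm : √M ≠ 0 := (Real.sqrt_pos.2 hM).ne'
  obtain ⟨p, hpp, hpd⟩ := exists_periodic_hasDerivAt_linear hf.neg
    (fun x => congrArg Neg.neg (hp x)) hT (neg_ne_zero.2 hm)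
  have hpc : Continuous p := continuous_iff_continuousAt.2 fun x => (hpd x).continuousAt
  obtain ⟨w, hwp, hwd⟩ := exists_periodic_hasDerivAt_linear hpc hpp hT hm
  refine ⟨w, .of_hasDerivAt hwp hwd fun x => (((hwd x).const_mul _).add (hpd x)).congr_deriv ?_⟩
  simp only [Pi.neg_apply]
  linear_combination w x * Real.mul_self_sqrt hM.le

end LinearEquations

section Comparison

variable {u v g g₁ g₂ : ℝ → ℝ}

lemma deriv_deriv_nonneg_of_isLocalMin {x₀ : ℝ} (hu : ContinuousAt u x₀)
    (hmin : IsLocalMin u x₀) : 0 ≤ deriv (deriv u) x₀ := by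
  by_contra! hneg
  have hmax := isLocalMax_of_deriv_deriv_neg hneg hmin.deriv_eq_zero hu
  have hconst : u =ᶠ[𝓝 x₀] fun _ => u x₀ := by
    filter_upwards [hmin, hmax] with x h₁ h₂ using le_antisymm h₂ h₁
  have hzero : deriv (deriv u) x₀ = 0 := by
    simpa using hconst.deriv.deriv_eq
  exact hneg.ne hzero

lemma HasPeriodicSecondDeriv.nonneg_of_forall_neg (hu : HasPeriodicSecondDeriv T u g) (hT : T ≠ 0)
    (hneg : ∀ x, u x < 0 → g x < 0) (x : ℝ) : 0 ≤ u x := by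
  obtain ⟨x₀, hx₀⟩ := exists_forall_le_of_periodic hu.continuous hu.periodic hT
  have hg : 0 ≤ g x₀ := by
    rw [← hu.deriv_deriv]
    exact deriv_deriv_nonneg_of_isLocalMin hu.continuous.continuousAt (.of_forall hx₀)
  exact (not_lt.1 (mt (hneg x₀) hg.not_gt)).trans (hx₀ x)

lemma HasPeriodicSecondDeriv.le_of_subsolution_of_supersolution {f : ℝ → ℝ → ℝ}
    (hu : HasPeriodicSecondDeriv T u g₁) (hv : HasPeriodicSecondDeriv T v g₂) (hT : T ≠ 0)
    (hf : ∀ x, StrictMono (f x)) (hsub : ∀ x, f x (u x) ≤ g₁ x) (hsuper : ∀ x, g₂ x ≤ f x (v x))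
    (x : ℝ) : u x ≤ v x := by
  refine sub_nonneg.1 ((hv.sub hu).nonneg_of_forall_neg hT (fun y hy => ?_) x)
  linarith [hf y (sub_neg.1 hy), hsub y, hsuper y]

lemma HasPeriodicSecondDeriv.sub_le_div {M K : ℝ}
    (hu : HasPeriodicSecondDeriv T u fun x => M * u x - g₁ x)
    (hv : HasPeriodicSecondDeriv T v fun x => M * v x - g₂ x) (hT : T ≠ 0) (hM : 0 < M)
    (hK : ∀ x, g₁ x - g₂ x ≤ K) (x : ℝ) : u x - v x ≤ K / M := by
  refine sub_le_iff_le_add'.2 (hu.le_of_subsolution_of_supersolution (hv.add_const (K / M)) hT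
    (f := fun x t => M * t - g₁ x) (fun x s t hst => ?_) (fun _ => le_rfl) (fun y => ?_) x)
  · exact sub_lt_sub_right (mul_lt_mul_of_pos_left hst hM) _
  · rw [mul_add, mul_div_cancel₀ _ hM.ne']
    linarith [hK y]

end Comparison

section Slopes

/-- All difference quotients of `g` between points of `s` lie in `[δ, M]`. -/
def HasSlopesIn (δ M : ℝ) (g : ℝ → ℝ) (s : Set ℝ) : Prop :=
  ∀ x ∈ s, ∀ y ∈ s, x ≤ y → δ * (y - x) ≤ g y - g x ∧ g y - g x ≤ M * (y - x)

variable {δ M : ℝ} {g : ℝ → ℝ}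

lemma HasSlopesIn.const_add {s : Set ℝ} (hg : HasSlopesIn δ M g s) (c : ℝ) :
    HasSlopesIn δ M (fun x => c + g x) s := fun x hx y hy hxy => by
  simpa only [add_sub_add_left_eq_sub] using hg x hx y hy hxy

lemma HasSlopesIn.strictMono (hg : HasSlopesIn δ M g univ) (hδ : 0 < δ) : StrictMono g :=
  fun x y hxy => sub_pos.1 <|
    (mul_pos hδ (sub_pos.2 hxy)).trans_le (hg x trivial y trivial hxy.le).1

lemma HasSlopesIn.abs_mul_sub_sub_le (hg : HasSlopesIn δ M g univ) (x y : ℝ) :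
    |(M * x - g x) - (M * y - g y)| ≤ (M - δ) * |x - y| := by
  wlog hxy : y ≤ x generalizing x y
  · rw [abs_sub_comm, abs_sub_comm x]
    exact this y x (le_of_not_ge hxy)
  obtain ⟨hlower, hupper⟩ := hg y trivial x trivial hxy
  rw [abs_of_nonneg (sub_nonneg.2 hxy), abs_of_nonneg] <;> linarith

lemma HasSlopesIn.continuous (hg : HasSlopesIn δ M g univ) : Continuous g := by
  have hcontraction : LipschitzWith (M - δ).toNNReal fun x => M * x - g x :=
    .of_dist_le_mul fun x y => (hg.abs_mul_sub_sub_le x y).trans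
      (mul_le_mul_of_nonneg_right (Real.le_coe_toNNReal _) (abs_nonneg _))
  simpa only [sub_sub_cancel] using (continuous_const_mul M).fun_sub hcontraction.continuous

lemma HasSlopesIn.exists_extension {a b : ℝ} (hg : HasSlopesIn δ M g (Icc a b)) (hab : a ≤ b)
    (hδM : δ ≤ M) : ∃ G, HasSlopesIn δ M G univ ∧ EqOn G g (Icc a b) := by
  let p : ℝ → ℝ := fun t => projIcc a b hab t
  refine ⟨fun t => g (p t) + δ * (t - p t), fun x _ y _ hxy => ?_, fun t ht => ?_⟩
  · have hp : p x ≤ p y := monotone_projIcc hab hxy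
    have hp_sub : p y - p x ≤ y - x :=
      (le_abs_self _).trans ((abs_projIcc_sub_projIcc hab).trans_eq
        (abs_of_nonneg (sub_nonneg.2 hxy)))
    obtain ⟨hlower, hupper⟩ := hg _ (projIcc a b hab x).2 _ (projIcc a b hab y).2 hp
    have hrest := mul_le_mul_of_nonneg_right hδM (sub_nonneg.2 hp_sub)
    constructor <;> linarith
  · simp only [p, projIcc_of_mem hab ht, sub_self, mul_zero, add_zero]

lemma hasSlopesIn_neg_div {k a b : ℝ} (hk : 0 ≤ k) (ha : 0 < a) :
    HasSlopesIn (k / b ^ 2) (k / a ^ 2) (fun t => -(k / t)) (Icc a b) := by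
  rintro x ⟨hax, hxb⟩ y ⟨hay, hyb⟩ hxy
  have hx : 0 < x := ha.trans_le hax
  have hy : 0 < y := ha.trans_le hay
  have hslope : -(k / y) - -(k / x) = k / (x * y) * (y - x) := by
    field_simp
    ring
  rw [hslope]
  constructor <;> refine mul_le_mul_of_nonneg_right ?_ (sub_nonneg.2 hxy) <;> gcongr <;> nlinarith

end Slopes

section NonlinearEquations

theorem exists_hasPeriodicSecondDeriv_of_hasSlopesIn {δ M : ℝ} {f : ℝ → ℝ → ℝ}
    (hf : Continuous (Function.uncurry f)) (hp : Periodic f T) (hT : 0 < T) (hδ : 0 < δ)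
    (hδM : δ ≤ M) (hslopes : ∀ x, HasSlopesIn δ M (f x) univ) :
    ∃ u, HasPeriodicSecondDeriv T u fun x => f x (u x) := by
  have : Fact (0 < T) := ⟨hT⟩
  have hM : 0 < M := hδ.trans_le hδM
  have hsolve (u : C(AddCircle T, ℝ)) : ∃ w : C(AddCircle T, ℝ),
      HasPeriodicSecondDeriv T (fun x : ℝ => w x)
        fun x : ℝ => M * w x - (M * u x - f x (u x)) := by
    have hu : Continuous fun x : ℝ => u x := u.continuous.comp (AddCircle.continuous_mk' T)
    obtain ⟨w, hw⟩ := exists_hasPeriodicSecondDeriv_mul_sub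
      (f := fun x : ℝ => M * u x - f x (u x))
      ((continuous_const.mul hu).sub (hf.comp (continuous_id.prodMk hu)))
      (fun x => by simp only [AddCircle.coe_add_period, hp x]) hT.ne' hM
    exact ⟨⟨hw.periodic.lift, continuous_coinduced_dom.2 hw.continuous⟩, hw⟩
  choose Φ hΦ using hsolve
  have hcontr : ContractingWith ((M - δ) / M).toNNReal Φ := by
    refine ⟨Real.toNNReal_lt_one.2 ((div_lt_one hM).2 (sub_lt_self M hδ)),
      .of_dist_le_mul fun u v => ?_⟩
    have hratio : 0 ≤ (M - δ) / M := div_nonneg (sub_nonneg.2 hδM) hM.le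
    have hsource (x : ℝ) :
        |(M * u x - f x (u x)) - (M * v x - f x (v x))| ≤ (M - δ) * dist u v :=
      ((hslopes x).abs_mul_sub_sub_le _ _).trans
        (mul_le_mul_of_nonneg_left (ContinuousMap.dist_apply_le_dist (f := u) (g := v) x)
          (sub_nonneg.2 hδM))
    rw [Real.coe_toNNReal _ hratio, ContinuousMap.dist_le (mul_nonneg hratio dist_nonneg)]
    intro ξ
    induction ξ using QuotientAddGroup.induction_on with | H x =>
    rw [div_mul_eq_mul_div, Real.dist_eq, abs_sub_le_iff]
    exact ⟨(hΦ u).sub_le_div (hΦ v) hT.ne' hM (fun y => (abs_sub_le_iff.1 (hsource y)).1) x,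
      (hΦ v).sub_le_div (hΦ u) hT.ne' hM (fun y => (abs_sub_le_iff.1 (hsource y)).2) x⟩
  have hfix := hΦ hcontr.fixedPoint
  rw [hcontr.fixedPoint_isFixedPt] at hfix
  exact ⟨_, by simpa only [sub_sub_cancel] using hfix⟩

theorem exists_hasPeriodicSecondDeriv_between {δ M a b : ℝ} {h g α α₂ β β₂ : ℝ → ℝ}
    (hh : Continuous h) (hp : Periodic h T) (hT : 0 < T) (hδ : 0 < δ) (hδM : δ ≤ M)
    (hg : HasSlopesIn δ M g (Icc a b))
    (hα : HasPeriodicSecondDeriv T α α₂) (hα_mem : ∀ x, α x ∈ Icc a b)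
    (hsub : ∀ x, h x + g (α x) ≤ α₂ x)
    (hβ : HasPeriodicSecondDeriv T β β₂) (hβ_mem : ∀ x, β x ∈ Icc a b)
    (hsuper : ∀ x, β₂ x ≤ h x + g (β x)) :
    ∃ u, HasPeriodicSecondDeriv T u (fun x => h x + g (u x)) ∧ ∀ x, u x ∈ Icc (α x) (β x) := by
  obtain ⟨G, hG, hGg⟩ := hg.exists_extension ((hα_mem 0).1.trans (hα_mem 0).2) hδM
  have hslopes x : HasSlopesIn δ M (fun t => h x + G t) univ := hG.const_add (h x)
  have hmono x : StrictMono fun t => h x + G t := (hslopes x).strictMono hδ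
  have hGc : Continuous G := hG.continuous
  obtain ⟨u, hu⟩ := exists_hasPeriodicSecondDeriv_of_hasSlopesIn (f := fun x t => h x + G t)
    (by fun_prop) (fun x => by simp only [hp x]) hT hδ hδM hslopes
  have hαu : ∀ x, α x ≤ u x :=
    hα.le_of_subsolution_of_supersolution hu hT.ne' hmono
      (fun x => by simpa only [hGg (hα_mem x)] using hsub x) fun _ => le_rfl
  have huβ : ∀ x, u x ≤ β x :=
    hu.le_of_subsolution_of_supersolution hβ hT.ne' hmono (fun _ => le_rfl)
      fun x => by simpa only [hGg (hβ_mem x)] using hsuper x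
  have hGu x : G (u x) = g (u x) :=
    hGg ⟨(hα_mem x).1.trans (hαu x), (huβ x).trans (hβ_mem x).2⟩
  exact ⟨u, by simpa only [hGu] using hu, fun x => ⟨hαu x, huβ x⟩⟩

lemma exists_supersolution_sub_div {k ε : ℝ} {h : ℝ → ℝ} (hk : 0 ≤ k) (hh : Continuous h)
    (hp : Periodic h T) (hT : 0 < T) (hint : 0 < ∫ x in 0..T, h x) :
    ∃ β g : ℝ → ℝ, HasPeriodicSecondDeriv T β g ∧ (∀ x, ε ≤ β x) ∧
      ∀ x, g x ≤ h x - k / β x := by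
  let μ : ℝ := (∫ x in 0..T, h x) / T
  have hμ : 0 < μ := div_pos hint hT
  obtain ⟨H, hH⟩ := exists_hasPeriodicSecondDeriv (f := fun x => h x - μ) (by fun_prop)
    (fun x => by simp only [hp x]) hT.ne' (by
      rw [intervalIntegral.integral_sub (hh.intervalIntegrable _ _) (by simp),
        intervalIntegral.integral_const, sub_zero, smul_eq_mul, mul_div_cancel₀ _ hT.ne', sub_self])
  obtain ⟨x₀, hx₀⟩ := exists_forall_le_of_periodic hH.continuous hH.periodic hT.ne'
  refine ⟨_, _, hH.add_const (max ε (k / μ + 1) - H x₀), fun x => ?_, fun x => ?_⟩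
  · linarith [hx₀ x, le_max_left ε (k / μ + 1)]
  · have hge : k / μ + 1 ≤ H x + (max ε (k / μ + 1) - H x₀) := by
      linarith [hx₀ x, le_max_right ε (k / μ + 1)]
    have hkμ : 0 ≤ k / μ := by positivity
    refine sub_le_sub_left ((div_le_comm₀ (by linarith) hμ).2 (by linarith)) _

theorem exists_pos_hasPeriodicSecondDeriv_sub_div {k : ℝ} {h : ℝ → ℝ} (hk : 0 < k)
    (hh : Continuous h) (hp : Periodic h T) (hT : 0 < T) (hint : 0 < ∫ x in 0..T, h x) :
    ∃ v, HasPeriodicSecondDeriv T v (fun x => h x - k / v x) ∧ ∀ x, 0 < v x := by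
  obtain ⟨K, hK₀, hK⟩ := exists_abs_le_of_periodic hh hp hT.ne'
  let ε : ℝ := k / K
  have hε : 0 < ε := div_pos hk hK₀
  obtain ⟨β, g, hβ, hεβ, hβ_super⟩ := exists_supersolution_sub_div (ε := ε) hk.le hh hp hT hint
  obtain ⟨B, -, hB⟩ := exists_abs_le_of_periodic hβ.continuous hβ.periodic hT.ne'
  have hβB x : β x ≤ B := (le_abs_self _).trans (hB x)
  have hεB : ε ≤ B := (hεβ 0).trans (hβB 0)
  have hδ : 0 < k / B ^ 2 := div_pos hk (pow_pos (hε.trans_le hεB) 2)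
  have hδM : k / B ^ 2 ≤ k / ε ^ 2 := by gcongr
  have hkε : k / ε = K := div_div_cancel₀ hk.ne'
  obtain ⟨v, hv, hv_mem⟩ := exists_hasPeriodicSecondDeriv_between hh hp hT hδ hδM
    (hasSlopesIn_neg_div hk.le hε) (.const T ε) (fun _ => left_mem_Icc.2 hεB)
    (fun x => by linarith [le_abs_self (h x), hK x]) hβ (fun x => ⟨hεβ x, hβB x⟩) hβ_super
  exact ⟨v, hv, fun x => hε.trans_le (hv_mem x).1⟩

end NonlinearEquations

section Normalization

lemma exists_le_integral_one_div_mul_add {L a b : ℝ} (C : ℝ) (hL : 0 < L) (hab : a < b) :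
    ∃ s, 0 < s ∧ C ≤ ∫ x in a..b, 1 / (L * (x - a) + s) := by
  have hlength : 0 < L * (b - a) := mul_pos hL (sub_pos.2 hab)
  let s : ℝ := L * (b - a) * Real.exp (-(L * C))
  have hs : 0 < s := mul_pos hlength (Real.exp_pos _)
  refine ⟨s, hs, ?_⟩
  have hratio : (L * (b - a) + s) / s = Real.exp (L * C) + 1 := by
    have hba : b - a ≠ 0 := (sub_pos.2 hab).ne'
    simp only [s, Real.exp_neg]
    field_simp
  have hintegral : ∫ x in a..b, 1 / (L * (x - a) + s) = L⁻¹ * Real.log (Real.exp (L * C) + 1) :=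
    calc
      _ = ∫ x in a..b, 1 / (L * x + (s - L * a)) := by
        congr 1 with x
        ring_nf
      _ = L⁻¹ * ∫ x in s..L * (b - a) + s, 1 / x := by
        rw [intervalIntegral.integral_comp_mul_add (fun x => 1 / x) hL.ne', smul_eq_mul]
        ring_nf
      _ = _ := by rw [integral_one_div_of_pos hs (by positivity), hratio]
  rw [hintegral, le_inv_mul_iff₀ hL, Real.le_log_iff_exp_le (by positivity)]
  linarith

lemma exists_integral_one_div_add_eq {f : ℝ → ℝ} {L C a b : ℝ} (hf : Continuous f)
    (hf₀ : ∀ x, 0 ≤ f x) (hfL : ∀ x ∈ Icc a b, f x ≤ L * (x - a)) (hL : 0 < L) (hab : a < b)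
    (hC : 0 < C) : ∃ s, 0 < s ∧ ∫ x in a..b, 1 / (f x + s) = C := by
  have hpos {s : ℝ} (hs : 0 < s) (x : ℝ) : 0 < f x + s := add_pos_of_nonneg_of_pos (hf₀ x) hs
  have hcont {s : ℝ} (hs : 0 < s) : Continuous fun x => 1 / (f x + s) :=
    continuous_const.div (hf.add continuous_const) fun x => (hpos hs x).ne'
  let I : ℝ → ℝ := fun s => ∫ x in a..b, 1 / (f x + s)
  have hI : Continuous fun t => I (Real.exp t) :=
    intervalIntegral.continuous_parametric_intervalIntegral_of_continuous'
      (continuous_const.div (by fun_prop) fun p : ℝ × ℝ => (hpos (Real.exp_pos p.1) p.2).ne') a b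
  have hsmall : ∃ s, 0 < s ∧ I s ≤ C := by
    have hs : 0 < (b - a) / C := div_pos (sub_pos.2 hab) hC
    refine ⟨(b - a) / C, hs, ?_⟩
    calc
      I ((b - a) / C) ≤ ∫ _ in a..b, 1 / ((b - a) / C) :=
        intervalIntegral.integral_mono hab.le ((hcont hs).intervalIntegrable _ _) (by simp)
          fun x => one_div_le_one_div_of_le hs (le_add_of_nonneg_left (hf₀ x))
      _ = C := by
        rw [intervalIntegral.integral_const, smul_eq_mul, one_div_div,
          mul_div_cancel₀ _ (sub_pos.2 hab).ne']
  have hlarge : ∃ s, 0 < s ∧ C ≤ I s := by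
    obtain ⟨s, hs, hCs⟩ := exists_le_integral_one_div_mul_add C hL hab
    have hlin : ∀ x ∈ Icc a b, 0 < L * (x - a) + s := fun x hx =>
      add_pos_of_nonneg_of_pos (mul_nonneg hL.le (sub_nonneg.2 hx.1)) hs
    refine ⟨s, hs, hCs.trans (intervalIntegral.integral_mono_on hab.le
      (ContinuousOn.intervalIntegrable_of_Icc hab.le ?_) ((hcont hs).intervalIntegrable _ _)
      fun x hx => one_div_le_one_div_of_le (hpos hs x) (by linarith [hfL x hx]))⟩
    exact continuousOn_const.div (by fun_prop) fun x hx => (hlin x hx).ne'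
  obtain ⟨s₁, hs₁, hIs₁⟩ := hsmall
  obtain ⟨s₂, hs₂, hIs₂⟩ := hlarge
  obtain ⟨t, ht⟩ : ∃ t, I (Real.exp t) = C := mem_range_of_exists_le_of_exists_ge hI
    ⟨Real.log s₁, by rwa [Real.exp_log hs₁]⟩ ⟨Real.log s₂, by rwa [Real.exp_log hs₂]⟩
  exact ⟨Real.exp t, Real.exp_pos t, ht⟩

lemma exists_pos_hasPeriodicSecondDeriv_integral_one_div_eq {C : ℝ} {h : ℝ → ℝ}
    (hh : Continuous h) (hp : Periodic h T) (hT : 0 < T) (hint : ∫ x in 0..T, h x = 0)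
    (hC : 0 < C) :
    ∃ v, HasPeriodicSecondDeriv T v h ∧ (∀ x, 0 < v x) ∧ ∫ x in 0..T, 1 / v x = C := by
  obtain ⟨H, hH⟩ := exists_hasPeriodicSecondDeriv hh hp hT.ne' hint
  obtain ⟨x₀, hx₀⟩ := exists_forall_le_of_periodic hH.continuous hH.periodic hT.ne'
  obtain ⟨L, hL₀, hL⟩ := hH.exists_abs_sub_le hT.ne'
  have hlip : ∀ x ∈ Icc x₀ (x₀ + T), H x + -H x₀ ≤ L * (x - x₀) := fun x hx => by
    rw [← sub_eq_add_neg, ← abs_of_nonneg (sub_nonneg.2 hx.1)]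
    exact (le_abs_self _).trans (hL x₀ x)
  have hH₀ := hH.add_const (-H x₀)
  have hnonneg x : 0 ≤ H x + -H x₀ := by linarith [hx₀ x]
  obtain ⟨s, hs, hsC⟩ := exists_integral_one_div_add_eq hH₀.continuous hnonneg hlip hL₀
    (lt_add_of_pos_right x₀ hT) hC
  have hv := hH₀.add_const s
  refine ⟨_, hv, fun x => add_pos_of_nonneg_of_pos (hnonneg x) hs, ?_⟩
  have hshift := (hv.periodic.comp fun t => 1 / t).intervalIntegral_add_eq 0 x₀
  rw [zero_add] at hshift
  exact hshift.trans hsC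

theorem exists_pos_hasPeriodicSecondDeriv_sub_div_integral_one_div_eq {k : ℝ} {h : ℝ → ℝ}
    (hk : 0 ≤ k) (hh : Continuous h) (hp : Periodic h T) (hT : 0 < T)
    (hint : ∫ x in 0..T, h x = k * T) :
    ∃ v, HasPeriodicSecondDeriv T v (fun x => h x - k / v x) ∧ (∀ x, 0 < v x) ∧
      ∫ x in 0..T, 1 / v x = T := by
  obtain rfl | hk := hk.eq_or_lt
  · simpa using exists_pos_hasPeriodicSecondDeriv_integral_one_div_eq hh hp hT (by simpa using hint)
      hT
  obtain ⟨v, hv, hv₀⟩ := exists_pos_hasPeriodicSecondDeriv_sub_div hk hh hp hT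
    (hint ▸ mul_pos hk hT)
  have hinv : Continuous fun x => 1 / v x :=
    continuous_const.div hv.continuous fun x => (hv₀ x).ne'
  have hbalance : ∫ x in 0..T, (h x - k * (1 / v x)) = 0 := by
    simpa only [mul_one_div] using hv.integral_eq_zero
      (hh.sub (continuous_const.div hv.continuous fun x => (hv₀ x).ne'))
  rw [intervalIntegral.integral_sub (hh.intervalIntegrable _ _)
    ((hinv.const_mul k).intervalIntegrable _ _), intervalIntegral.integral_const_mul,
    hint, sub_eq_zero] at hbalance
  exact ⟨v, hv, hv₀, (mul_left_cancel₀ hk.ne' hbalance).symm⟩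

end Normalization

theorem exists_periodic_potential {k : ℝ} {h : ℝ → ℝ} (hk : 0 ≤ k) (hh : ContDiff ℝ ∞ h)
    (hp : Periodic h T) (hT : 0 < T) (hint : ∫ x in 0..T, h x = k * T) :
    ∃ φ : ℝ → ℝ, ContDiff ℝ ∞ φ ∧ Periodic φ T ∧ (∀ x, 0 < 1 + deriv (deriv φ) x) ∧
      ∀ x, deriv (deriv fun y => 1 / (1 + deriv (deriv φ) y)) x
        = h x - k * (1 + deriv (deriv φ) x) := by
  obtain ⟨v, hv, hv₀, hvint⟩ := exists_pos_hasPeriodicSecondDeriv_sub_div_integral_one_div_eq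
    hk hh.continuous hp hT hint
  have hv_smooth : ContDiff ℝ ∞ v := hv.contDiff fun n hn =>
    (contDiff_infty.1 hh n).sub (contDiff_const.div hn fun x => (hv₀ x).ne')
  have hg : ContDiff ℝ ∞ fun x => 1 / v x - 1 :=
    (contDiff_const.div hv_smooth fun x => (hv₀ x).ne').sub contDiff_const
  have hgint : ∫ x in 0..T, (1 / v x - 1) = 0 := by
    have hinv : Continuous fun x => 1 / v x :=
      continuous_const.div hv.continuous fun x => (hv₀ x).ne'
    rw [intervalIntegral.integral_sub (hinv.intervalIntegrable _ _) (by simp), hvint]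
    simp
  obtain ⟨φ, hφ⟩ := exists_hasPeriodicSecondDeriv hg.continuous
    (fun x => by simp only [hv.periodic x]) hT.ne' hgint
  have hφv x : 1 + deriv (deriv φ) x = 1 / v x := by
    rw [hφ.deriv_deriv, add_sub_cancel]
  refine ⟨φ, hφ.contDiff fun n _ => contDiff_infty.1 hg n, hφ.periodic, fun x => ?_, fun x => ?_⟩
  · rw [hφv]
    exact one_div_pos.2 (hv₀ x)
  · simp only [hφv, one_div_one_div, hv.deriv_deriv, mul_one_div]

lemma sqrt_one_sub_det_sq_add_trace_sq_pos (a b c : ℝ) :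
    0 < √((1 - (a * c - b ^ 2)) ^ 2 + (a + c) ^ 2) := by
  refine Real.sqrt_pos.2 (lt_of_le_of_ne (by positivity) fun hzero => ?_)
  have hcombination : (1 - (a * c - b ^ 2)) + c * (a + c) = 1 + b ^ 2 + c ^ 2 := by ring
  obtain ⟨hd, hτ⟩ := (add_eq_zero_iff_of_nonneg (sq_nonneg _) (sq_nonneg _)).1 hzero.symm
  rw [pow_eq_zero_iff two_ne_zero] at hd hτ
  rw [hd, hτ] at hcombination
  nlinarith [sq_nonneg b, sq_nonneg c]


/-- Solvability of the reduced coupled dHYM ODE on an abelian surface. -/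
theorem stmt_1 (α a b c : ℝ) (hα : 0 < α)
    (d τ D C S : ℝ) (hd : d = a * c - b ^ 2) (hτ : τ = a + c)
    (hD : D = Real.sqrt ((1 - d) ^ 2 + τ ^ 2))
    (hC : C = (1 - d) / D) (hS : S = -τ / D)
    (A : ℝ → ℝ) (hA : ContDiff ℝ (⊤ : ℕ∞) A) (hAper : Function.Periodic A 1)
    (hint : ∫ x in (0 : ℝ)..1, A x = -(α * D)) :
    ∃ φ : ℝ → ℝ, ContDiff ℝ (⊤ : ℕ∞) φ ∧ Function.Periodic φ 1 ∧
      (∀ x, 0 < 1 + deriv (deriv φ) x) ∧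
      ∀ x, -(1 / 4) * deriv (deriv (fun y => 1 / (1 + deriv (deriv φ) y))) x
            - α * b ^ 2 * (1 + deriv (deriv φ) x) / (C - c * S)
            + α * (c ^ 2 + 1) / (c * S - C) = A x := by
  obtain ⟨K, hKdef⟩ : ∃ K, K = (1 + b ^ 2 + c ^ 2) / D := ⟨_, rfl⟩
  have hD₀ : 0 < D := by
    rw [hD, hd, hτ]
    exact sqrt_one_sub_det_sq_add_trace_sq_pos a b c
  have hKD : K * D = 1 + b ^ 2 + c ^ 2 := by rw [hKdef, div_mul_cancel₀ _ hD₀.ne']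
  have hK₀ : 0 < K := by rw [hKdef]; positivity
  have hCS : C - c * S = K := by
    rw [hKdef, hC, hS, hd, hτ]
    field_simp
    ring
  have hh_int : ∫ x in (0 : ℝ)..1, -4 * (A x + α * (c ^ 2 + 1) / K)
      = 4 * (α * b ^ 2 / K) * 1 := by
    rw [intervalIntegral.integral_const_mul, intervalIntegral.integral_add
      (hA.continuous.intervalIntegrable _ _) (by simp), hint, intervalIntegral.integral_const]
    simp only [sub_zero, one_smul]
    field_simp
    linear_combination hKD
  obtain ⟨φ, hφ, hφp, hφ₀, hφ_eq⟩ := exists_periodic_potential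
    (by positivity) (contDiff_const.mul (hA.add contDiff_const))
    (fun x => by simp only [hAper x]) one_pos hh_int
  refine ⟨φ, hφ, hφp, hφ₀, fun x => ?_⟩
  rw [hφ_eq, ← neg_sub C, hCS]
  field_simp
  ring
end

section
/- Let K > 0 and M be real constants and let A : ℝ → ℝ be a continuous 1-periodic function. Suppose φ : ℝ → ℝ is four times continuously differentiable, 1-periodic, with w(x) := 1 + φ''(x) > 0 for all x, and satisfies −(1/4)·(1/w)''(x) − K·w(x) + M = A(x) for all x ∈ ℝ. Then w(x) ≤ (M + sup|A|)/K for all x ∈ ℝ. -/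
/-!
At a maximum point `a` of `w` the function `1 / w` has a minimum, so `(1 / w)'' a ≥ 0`, and the
equation at `a` leaves `K * w a ≤ M - A a ≤ M + sup |A|`. Periodicity provides the maximum point.
-/

open Filter Function Set Topology

lemma deriv_deriv_nonneg_of_isLocalMin_s2 {f : ℝ → ℝ} {a : ℝ} (hmin : IsLocalMin f a)
    (hf : ContinuousAt f a) : 0 ≤ deriv (deriv f) a := by
  by_contra! hneg
  -- By the second-derivative test `a` is a local maximum as well, so `f` is constant near `a`.
  have hmax : IsLocalMax f a := isLocalMax_of_deriv_deriv_neg hneg hmin.deriv_eq_zero hf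
  have hconst : f =ᶠ[𝓝 a] fun _ ↦ f a := by
    filter_upwards [hmin, hmax] with y hle hge using le_antisymm hge hle
  have hzero : deriv (deriv f) a = 0 := by simpa using hconst.deriv.deriv_eq
  exact hneg.ne hzero

lemma isLocalMin_one_div_of_isLocalMax {X 𝕜 : Type*} [TopologicalSpace X] [Field 𝕜]
    [LinearOrder 𝕜] [IsStrictOrderedRing 𝕜] {w : X → 𝕜} {a : X} (hmax : IsLocalMax w a)
    (hpos : ∀ᶠ y in 𝓝 a, 0 < w y) : IsLocalMin (fun y ↦ 1 / w y) a := by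
  filter_upwards [hmax, hpos] with y hle hy using one_div_le_one_div_of_le hy hle

lemma le_div_of_isLocalMax_of_add_deriv_deriv_one_div_le {κ K B a : ℝ} {w : ℝ → ℝ}
    (hκ : 0 ≤ κ) (hK : 0 < K) (hmax : IsLocalMax w a) (hw : ContinuousAt w a) (hpos : 0 < w a)
    (hle : K * w a + κ * deriv (deriv fun y ↦ 1 / w y) a ≤ B) : w a ≤ B / K := by
  have hmin : IsLocalMin (fun y ↦ 1 / w y) a :=
    isLocalMin_one_div_of_isLocalMax hmax (hw.eventually_const_lt hpos)
  have hderiv : 0 ≤ deriv (deriv fun y ↦ 1 / w y) a :=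
    deriv_deriv_nonneg_of_isLocalMin_s2 hmin (continuousAt_const.div hw hpos.ne')
  rw [le_div_iff₀' hK]
  exact (le_add_of_nonneg_right (mul_nonneg hκ hderiv)).trans hle

lemma periodic_deriv_s2 {𝕜 F : Type*} [NontriviallyNormedField 𝕜] [NormedAddCommGroup F]
    [NormedSpace 𝕜 F] {f : 𝕜 → F} {c : 𝕜} (hf : Periodic f c) : Periodic (deriv f) c := by
  intro x
  rw [← deriv_comp_add_const, hf.funext]

lemma exists_forall_le_of_periodic_s2 {α : Type*} [LinearOrder α] [TopologicalSpace α]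
    [ClosedIciTopology α] {f : ℝ → α} {c : ℝ} (hper : Periodic f c) (hc : c ≠ 0)
    (hf : Continuous f) : ∃ a, ∀ x, f x ≤ f a := by
  obtain ⟨_, ⟨a, rfl⟩, ha⟩ :=
    (hper.compact_of_continuous hc hf).exists_isGreatest (range_nonempty f)
  exact ⟨a, fun x ↦ ha (mem_range_self x)⟩

theorem stmt_2_general {c κ K M : ℝ} (hc : c ≠ 0) (hκ : 0 ≤ κ) (hK : 0 < K) {A w : ℝ → ℝ}
    (hA : BddAbove (range fun y ↦ |A y|)) (hw : ContDiff ℝ 2 w) (hper : Periodic w c)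
    (hpos : ∀ x, 0 < w x)
    (heq : ∀ x, -κ * deriv (deriv fun y ↦ 1 / w y) x - K * w x + M = A x) (x : ℝ) :
    w x ≤ (M + ⨆ y, |A y|) / K := by
  obtain ⟨a, ha⟩ := exists_forall_le_of_periodic_s2 hper hc hw.continuous
  have hAa : -A a ≤ ⨆ y, |A y| := (neg_le_abs (A a)).trans (le_ciSup hA a)
  have hbound : K * w a + κ * deriv (deriv fun y ↦ 1 / w y) a ≤ M + ⨆ y, |A y| := by
    linarith [heq a]
  exact (ha x).trans <| le_div_of_isLocalMax_of_add_deriv_deriv_one_div_le hκ hK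
    (Eventually.of_forall ha) hw.continuous.continuousAt (hpos a) hbound

/-- Maximum-principle a priori bound for the reduced ODE:
    if −(1/4)(1/w)'' − K·w + M = A with w = 1 + φ'' > 0, then w ≤ (M + sup|A|)/K. -/
theorem stmt_2 (K M : ℝ) (hK : 0 < K)
    (A : ℝ → ℝ) (hA : Continuous A) (hAper : Function.Periodic A 1)
    (φ : ℝ → ℝ) (hφ : ContDiff ℝ 4 φ) (hφper : Function.Periodic φ 1)
    (hw : ∀ x, 0 < 1 + deriv (deriv φ) x)
    (heq : ∀ x, -(1 / 4) * deriv (deriv (fun y => 1 / (1 + deriv (deriv φ) y))) x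
        - K * (1 + deriv (deriv φ) x) + M = A x) :
    ∀ x, 1 + deriv (deriv φ) x ≤ (M + ⨆ y, |A y|) / K := by
  have hAbdd : BddAbove (range fun y ↦ |A y|) :=
    ((hAper.comp abs).compact_of_continuous one_ne_zero hA.abs).bddAbove
  have hsmooth : ContDiff ℝ 2 (deriv (deriv φ)) := hφ.iterate_deriv' 2 2
  have hper : Periodic (deriv (deriv φ)) 1 := periodic_deriv_s2 (periodic_deriv_s2 hφper)
  exact stmt_2_general one_ne_zero (by norm_num) hK hAbdd (contDiff_const.add hsmooth)
    (hper.comp (1 + ·)) hw heq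
end

section
/- Let a, b, c, p be real numbers with 1 + p ≠ 0. Set d = ac − b², τ = a + c, D = √((1−d)² + τ²), C = (1−d)/D, S = −τ/D, and define q = −(S·(1−d) + C·τ + p·(c·C + S))/(C − c·S). Let z = (1 − d + p − c·q) − i·(τ + q + c·p) ∈ ℂ. Then Im((C − i·S)·z) = 0, and Re((C − i·S)·z)/(1+p) = b²/((1+p)·(C − c·S)) − (c²+1)/(c·S − C). -/
/-!
Put `m = 1 - ic` and `w = det (1 - iF⁰) = (1 - ia) m + b²`. The perturbation only touches the
`(1,1)` entry, whose cofactor is `m`, so `z = w + (p - iq) m`. Rotating by the phase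
`u = C - iS = conj w / |w|` makes `u w = |w|` real, so `q` has to make `(p - iq) (u m)` real; thus
`p - iq` is `p` times `conj (u m) / Re (u m)`, and
`u z = |w| + p |m|² / Re (u m) = (Re (conj w * m) + p |m|²) / Re (u m)`.
For a symmetric `F⁰` one has `Re (conj w * m) = |m|² + b² > 0`.
-/

open Complex ComplexConjugate

/-- The inverse phase `e^{-i arg w} = conj w / |w|` of a complex number, by which the dHYM equation
rotates; it is `0` at `w = 0`. -/
noncomputable def invPhase (w : ℂ) : ℂ := conj w / ‖w‖

theorem invPhase_mul_self (w : ℂ) : invPhase w * w = ‖w‖ := by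
  rcases eq_or_ne w 0 with rfl | hw
  · simp
  · have hnorm : (‖w‖ : ℂ) ≠ 0 := ofReal_ne_zero.mpr (norm_ne_zero_iff.mpr hw)
    rw [invPhase, div_mul_eq_mul_div, conj_mul', sq, mul_div_cancel_right₀ _ hnorm]

theorem normSq_invPhase {w : ℂ} (hw : w ≠ 0) : normSq (invPhase w) = 1 := by
  rw [invPhase, map_div₀, normSq_conj, normSq_ofReal, normSq_eq_norm_sq, ← sq]
  exact div_self (pow_ne_zero 2 (norm_ne_zero_iff.mpr hw))

theorem norm_mul_invPhase (w : ℂ) : ‖w‖ * invPhase w = conj w := by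
  rcases eq_or_ne w 0 with rfl | hw
  · simp
  · exact mul_div_cancel₀ _ (ofReal_ne_zero.mpr (norm_ne_zero_iff.mpr hw))

theorem norm_mul_re_invPhase_mul (w m : ℂ) :
    ‖w‖ * (invPhase w * m).re = (conj w * m).re := by
  rw [← re_ofReal_mul, ← mul_assoc, norm_mul_invPhase]

theorem normSq_sub_I_mul (x y : ℝ) : normSq (x - I * y) = x ^ 2 + y ^ 2 := by
  rw [mul_comm, sub_eq_add_neg, ← neg_mul, ← ofReal_neg, normSq_add_mul_I, neg_sq]

theorem invPhase_sub_I_mul (x y : ℝ) :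
    invPhase (x - I * y) = ((x / √(x ^ 2 + y ^ 2) : ℝ) : ℂ) -
      I * ((-y / √(x ^ 2 + y ^ 2) : ℝ) : ℂ) := by
  have hnorm : ‖(x : ℂ) - I * y‖ = √(x ^ 2 + y ^ 2) := by
    rw [norm_def, normSq_sub_I_mul]
  rw [invPhase, hnorm]
  simp only [map_sub, map_mul, conj_ofReal, conj_I, ofReal_div, ofReal_neg]
  ring

theorem sub_I_mul_im_div_re_mul_self {k : ℂ} (hk : k.re ≠ 0) (p : ℝ) :
    (p - I * (p * k.im / k.re : ℝ)) * k = (p * normSq k / k.re : ℝ) := by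
  have hconj : (p - I * (p * k.im / k.re : ℝ) : ℂ) = (p / k.re : ℝ) * conj k := by
    apply Complex.ext
    · simp [hk]
    · simp [div_mul_eq_mul_div, neg_div]
  rw [hconj, mul_assoc, mul_comm (conj k), mul_conj, ← ofReal_mul, div_mul_eq_mul_div]

theorem invPhase_mul_add_sub_I_mul {w m k : ℂ} {p q : ℝ} (h : (conj w * m).re ≠ 0)
    (hk : k = invPhase w * m) (hq : q = p * k.im / k.re) :
    invPhase w * (w + (p - I * q) * m) =
      (((conj w * m).re + p * normSq m) / k.re : ℝ) := by
  have hw : w ≠ 0 := by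
    rintro rfl
    simp at h
  have hpairing : (conj w * m).re = ‖w‖ * k.re := by rw [hk, norm_mul_re_invPhase_mul]
  have hre : k.re ≠ 0 := right_ne_zero_of_mul (hpairing ▸ h)
  have hnormSq : normSq k = normSq m := by rw [hk, normSq_mul, normSq_invPhase hw, one_mul]
  calc invPhase w * (w + (p - I * q) * m)
      = invPhase w * w + (p - I * q) * k := by rw [hk]; ring
    _ = (‖w‖ + p * normSq m / k.re : ℝ) := by
        rw [invPhase_mul_self, hq, sub_I_mul_im_div_re_mul_self hre, hnormSq, ofReal_add]
    _ = (((conj w * m).re + p * normSq m) / k.re : ℝ) := by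
        rw [hpairing, add_div, mul_div_cancel_right₀ _ hre]

theorem re_conj_mul_add_ofReal_mul (s m : ℂ) (r : ℝ) :
    (conj (s * m + r) * m).re = s.re * normSq m + r * m.re := by
  simp only [map_add, map_mul, conj_ofReal, mul_re, mul_im, add_re, add_im, conj_re, conj_im,
    ofReal_re, ofReal_im, normSq_apply]
  ring

/-- The determinant `det (v - iF)` whose phase the dHYM equation prescribes, for real matrices `v`
(the metric) and `F` (the curvature form). -/
noncomputable def dhymDet {n : Type*} [Fintype n] [DecidableEq n] (v F : Matrix n n ℝ) : ℂ :=
  (v.map ofReal - I • F.map ofReal).det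

theorem dhymDet_diagonal_symm (x y a b c : ℝ) :
    dhymDet !![x, 0; 0, y] !![a, b; b, c] =
      (x - I * a) * (y - I * c) + (b ^ 2 : ℝ) := by
  simp only [dhymDet, Matrix.det_fin_two, Matrix.sub_apply, Matrix.smul_apply, Matrix.map_apply,
    Matrix.of_apply, Matrix.cons_val', Matrix.cons_val_zero, Matrix.cons_val_one,
    Matrix.cons_val_fin_one, smul_eq_mul, ofReal_zero, ofReal_pow]
  linear_combination (-(b : ℂ) ^ 2) * I_sq

theorem dhymDet_add_corner (x y a b c p q : ℝ) :
    dhymDet !![x + p, 0; 0, y] !![a + q, b; b, c] =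
      dhymDet !![x, 0; 0, y] !![a, b; b, c] + (p - I * q) * (y - I * c) := by
  rw [dhymDet_diagonal_symm, dhymDet_diagonal_symm]
  push_cast
  ring

theorem re_conj_dhymDet_mul (x y a b c : ℝ) :
    (conj (dhymDet !![x, 0; 0, y] !![a, b; b, c]) * (y - I * c)).re =
      x * (y ^ 2 + c ^ 2) + b ^ 2 * y := by
  rw [dhymDet_diagonal_symm, re_conj_mul_add_ofReal_mul, normSq_sub_I_mul]
  simp

theorem invPhase_mul_dhymDet_add_corner {x y a b c p q : ℝ} {k : ℂ} (hx : 0 < x) (hy : 0 < y)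
    (hk : k = invPhase (dhymDet !![x, 0; 0, y] !![a, b; b, c]) * (y - I * c))
    (hq : q = p * k.im / k.re) :
    invPhase (dhymDet !![x, 0; 0, y] !![a, b; b, c]) *
        dhymDet !![x + p, 0; 0, y] !![a + q, b; b, c] =
      (((x + p) * (y ^ 2 + c ^ 2) + b ^ 2 * y) / k.re : ℝ) := by
  have hpairing := re_conj_dhymDet_mul x y a b c
  have hpos : 0 < x * (y ^ 2 + c ^ 2) + b ^ 2 * y := by positivity
  rw [dhymDet_add_corner, invPhase_mul_add_sub_I_mul (hpairing ▸ hpos.ne') hk hq, hpairing,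
    normSq_sub_I_mul, add_right_comm, ← add_mul]

/-- With q solving the dHYM equation, Im((C − iS)·z) = 0 and
    Re((C − iS)·z)/(1+p) = b²/((1+p)(C − cS)) − (c²+1)/(cS − C). -/
theorem stmt_5 (a b c p : ℝ) (hp : 1 + p ≠ 0)
    (d τ D C S q : ℝ)
    (hd : d = a * c - b ^ 2) (hτ : τ = a + c)
    (hD : D = Real.sqrt ((1 - d) ^ 2 + τ ^ 2))
    (hC : C = (1 - d) / D) (hS : S = -τ / D)
    (hq : q = -(S * (1 - d) + C * τ + p * (c * C + S)) / (C - c * S))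
    (z : ℂ)
    (hz : z = ((1 - d + p - c * q : ℝ) : ℂ) - Complex.I * ((τ + q + c * p : ℝ) : ℂ)) :
    (((C : ℂ) - Complex.I * (S : ℂ)) * z).im = 0 ∧
    (((C : ℂ) - Complex.I * (S : ℂ)) * z).re / (1 + p) =
      b ^ 2 / ((1 + p) * (C - c * S)) - (c ^ 2 + 1) / (c * S - C) := by
  have hbase : dhymDet !![1, 0; 0, 1] !![a, b; b, c] = (1 - d : ℝ) - I * τ := by
    rw [dhymDet_diagonal_symm, hd, hτ]
    push_cast
    linear_combination ((a : ℂ) * c) * I_sq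
  have hz' : z = dhymDet !![1 + p, 0; 0, 1] !![a + q, b; b, c] := by
    rw [dhymDet_add_corner, hbase, hz]
    push_cast
    linear_combination (-(c : ℂ) * q) * I_sq
  have hphase : C - I * S = invPhase (dhymDet !![1, 0; 0, 1] !![a, b; b, c]) := by
    rw [hbase, invPhase_sub_I_mul, ← hD, hC, hS]
  set k : ℂ := (C - I * S) * ((1 : ℝ) - I * c) with hk
  have hre : k.re = C - c * S := by simp [hk, mul_comm]
  have him : k.im = -(c * C + S) := by simp [hk, mul_comm, add_comm]
  have hreal : S * (1 - d) + C * τ = 0 := by rw [hC, hS]; ring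
  have hq' : q = p * k.im / k.re := by rw [hq, hreal, hre, him, zero_add, mul_neg]
  rw [hphase] at hk
  rw [hphase, hz', invPhase_mul_dhymDet_add_corner one_pos one_pos hk hq', ofReal_im, ofReal_re,
    hre, ← neg_sub C (c * S)]
  refine ⟨rfl, ?_⟩
  field_simp
  ring
end

section
/- Let n be a positive integer, μ ≥ 0, and let φ : ℝⁿ → ℝ be a twice continuously differentiable function that is ℤⁿ-periodic (φ(x + k) = φ(x) for all x ∈ ℝⁿ and k ∈ ℤⁿ) and whose Hessian satisfies D²φ(x)[v, v] ≥ −μ·‖v‖² for all x, v ∈ ℝⁿ. Then sup φ − inf φ ≤ μ·n/8. -/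
/-!
A lower bound `D²φ ≥ -μ` makes `φ` strongly convex with the negative constant `-μ`. If `φ` has a
maximum at `p`, then on the line through `p` and `x` the points just beyond `p` have value at most
`φ p`, so `φ` cannot drop below `φ p - μ / 2 * ‖x - p‖ ^ 2` at `x`. Rounding coordinates moves every
point by a period to within `√n / 2` of `p`, and `μ / 2 * (√n / 2) ^ 2 = μ * n / 8`.
-/

open Set Filter Topology Function

section StrongConvexity

variable {E : Type*} [NormedAddCommGroup E]

theorem hasDerivAt_comp_lineMap [NormedSpace ℝ E] {F : Type*} [NormedAddCommGroup F]
    [NormedSpace ℝ F] {g : E → F} (hg : Differentiable ℝ g) (x y : E) (t : ℝ) :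
    HasDerivAt (fun t : ℝ ↦ g (AffineMap.lineMap x y t))
      (fderiv ℝ g (AffineMap.lineMap x y t) (y - x)) t :=
  (hg _).hasFDerivAt.comp_hasDerivAt t AffineMap.hasDerivAt_lineMap

theorem convexOn_comp_lineMap_sub_sq [NormedSpace ℝ E] {f : E → ℝ} {m : ℝ}
    (hf : Differentiable ℝ f) (hf' : Differentiable ℝ (fderiv ℝ f))
    (hm : ∀ x v, m * ‖v‖ ^ 2 ≤ fderiv ℝ (fderiv ℝ f) x v v) (x y : E) :
    ConvexOn ℝ univ fun t : ℝ ↦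
      f (AffineMap.lineMap x y t) - m / 2 * ‖y - x‖ ^ 2 * t ^ 2 := by
  have deriv_one (t : ℝ) :
      HasDerivAt (fun t : ℝ ↦ f (AffineMap.lineMap x y t) - m / 2 * ‖y - x‖ ^ 2 * t ^ 2)
        (fderiv ℝ f (AffineMap.lineMap x y t) (y - x) - m * ‖y - x‖ ^ 2 * t) t := by
    refine ((hasDerivAt_comp_lineMap hf x y t).sub
      ((hasDerivAt_pow 2 t).const_mul (m / 2 * ‖y - x‖ ^ 2))).congr_deriv ?_
    push_cast
    ring
  have deriv_two (t : ℝ) :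
      HasDerivAt
        (fun t : ℝ ↦ fderiv ℝ f (AffineMap.lineMap x y t) (y - x) - m * ‖y - x‖ ^ 2 * t)
        (fderiv ℝ (fderiv ℝ f) (AffineMap.lineMap x y t) (y - x) (y - x) - m * ‖y - x‖ ^ 2)
        t := by
    refine (((hasDerivAt_comp_lineMap hf' x y t).clm_apply (hasDerivAt_const t (y - x))).sub
      ((hasDerivAt_id t).const_mul (m * ‖y - x‖ ^ 2))).congr_deriv ?_
    rw [map_zero, add_zero, mul_one]
  exact convexOn_of_hasDerivWithinAt2_nonneg convex_univ
    (fun t _ ↦ (deriv_one t).continuousAt.continuousWithinAt)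
    (fun t _ ↦ (deriv_one t).hasDerivWithinAt) (fun t _ ↦ (deriv_two t).hasDerivWithinAt)
    fun t _ ↦ sub_nonneg.2 (hm _ _)

theorem strongConvexOn_univ_of_le_fderiv_fderiv [NormedSpace ℝ E] {f : E → ℝ} {m : ℝ}
    (hf : Differentiable ℝ f) (hf' : Differentiable ℝ (fderiv ℝ f))
    (hm : ∀ x v, m * ‖v‖ ^ 2 ≤ fderiv ℝ (fderiv ℝ f) x v v) : StrongConvexOn univ m f := by
  refine ⟨convex_univ, fun x _ y _ a b ha hb hab ↦ ?_⟩
  have convexity :=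
    (convexOn_comp_lineMap_sub_sq hf hf' hm x y).2 (mem_univ 0) (mem_univ 1) ha hb hab
  obtain rfl : a = 1 - b := eq_sub_of_add_eq hab
  simp only [smul_eq_mul, mul_zero, mul_one, zero_add, AffineMap.lineMap_apply_zero,
    AffineMap.lineMap_apply_one] at convexity
  rw [AffineMap.lineMap_apply_module] at convexity
  rw [norm_sub_rev x y, smul_eq_mul, smul_eq_mul]
  linear_combination convexity

theorem continuous_of_strongConvexOn_univ [InnerProductSpace ℝ E] [FiniteDimensional ℝ E]
    {f : E → ℝ} {m : ℝ} (hf : StrongConvexOn univ m f) : Continuous f := by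
  have hconv : Continuous fun x ↦ f x - m / 2 * ‖x‖ ^ 2 :=
    (strongConvexOn_iff_convex.1 hf).locallyLipschitz.continuous
  have hsq : Continuous fun x : E ↦ m / 2 * ‖x‖ ^ 2 := by fun_prop
  exact (hconv.add hsq).congr fun x ↦ sub_add_cancel _ _

theorem add_sq_le_of_strongConvexOn_of_isLocalMax [NormedSpace ℝ E] {s : Set E} {f : E → ℝ}
    {m : ℝ} {p x : E} (hf : StrongConvexOn s m f) (hs : s ∈ 𝓝 p) (hp : IsLocalMax f p)
    (hx : x ∈ s) : f p + m / 2 * ‖x - p‖ ^ 2 ≤ f x := by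
  have tendsto_beyond : Tendsto (fun t : ℝ ↦ p - t • (x - p)) (𝓝[>] 0) (𝓝 p) :=
    (Continuous.tendsto' (by fun_prop) 0 p (by simp)).mono_left nhdsWithin_le_nhds
  have tendsto_bound : Tendsto (fun t : ℝ ↦ f p + m / 2 * (1 + t) * ‖x - p‖ ^ 2) (𝓝[>] 0)
      (𝓝 (f p + m / 2 * ‖x - p‖ ^ 2)) :=
    (Continuous.tendsto' (by fun_prop) 0 _ (by simp)).mono_left nhdsWithin_le_nhds
  refine le_of_tendsto tendsto_bound ?_
  filter_upwards [self_mem_nhdsWithin, tendsto_beyond hs, tendsto_beyond hp]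
    with t (ht : 0 < t) ht_mem (ht_le : f (p - t • (x - p)) ≤ f p)
  have p_eq : (t / (1 + t)) • x + (1 / (1 + t)) • (p - t • (x - p)) = p := by
    match_scalars <;> field_simp <;> ring
  have norm_eq : ‖x - (p - t • (x - p))‖ = (1 + t) * ‖x - p‖ := by
    rw [show x - (p - t • (x - p)) = (1 + t) • (x - p) by module, norm_smul,
      Real.norm_of_nonneg (by positivity)]
  have convexity := hf.2 hx ht_mem (show 0 ≤ t / (1 + t) by positivity)
    (show 0 ≤ 1 / (1 + t) by positivity) (by field_simp; ring)
  rw [p_eq, norm_eq, smul_eq_mul, smul_eq_mul] at convexity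
  field_simp at convexity
  have mul_le : t * (f p + m / 2 * (1 + t) * ‖x - p‖ ^ 2) ≤ t * f x := by linarith
  exact le_of_mul_le_mul_left mul_le ht

end StrongConvexity

section Periodic

variable {E : Type*} [NormedAddCommGroup E] {f : E → ℝ} {R : ℝ}

theorem exists_forall_le_of_periodic_s14 [ProperSpace E] (hf : Continuous f)
    (hcover : ∀ x, ∃ c, Periodic f c ∧ ‖x + c‖ ≤ R) : ∃ p, ∀ x, f x ≤ f p := by
  have hne : (Metric.closedBall (0 : E) R).Nonempty := by
    obtain ⟨c, -, hc⟩ := hcover 0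
    exact ⟨0 + c, mem_closedBall_zero_iff.2 hc⟩
  obtain ⟨p, -, hp⟩ := (isCompact_closedBall 0 R).exists_isMaxOn hne hf.continuousOn
  refine ⟨p, fun x ↦ ?_⟩
  obtain ⟨c, hc, hxc⟩ := hcover x
  exact (hc x).symm.trans_le (hp (mem_closedBall_zero_iff.2 hxc))

theorem iSup_sub_iInf_le_of_strongConvexOn_of_periodic [NormedSpace ℝ E] [ProperSpace E] {μ : ℝ}
    (hμ : 0 ≤ μ) (hf : Continuous f) (hconv : StrongConvexOn univ (-μ) f)
    (hcover : ∀ x, ∃ c, Periodic f c ∧ ‖x + c‖ ≤ R) :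
    (⨆ x, f x) - (⨅ x, f x) ≤ μ / 2 * R ^ 2 := by
  obtain ⟨p, hp⟩ := exists_forall_le_of_periodic_s14 hf hcover
  have lower (y : E) : f p - μ / 2 * R ^ 2 ≤ f y := by
    obtain ⟨c, hc, hyc⟩ := hcover (y - p)
    calc f p - μ / 2 * R ^ 2 ≤ f p - μ / 2 * ‖y - p + c‖ ^ 2 := by gcongr
      _ = f p + -μ / 2 * ‖y + c - p‖ ^ 2 := by rw [sub_add_eq_add_sub]; ring
      _ ≤ f (y + c) :=
        add_sq_le_of_strongConvexOn_of_isLocalMax hconv univ_mem (.of_forall hp) (mem_univ _)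
      _ = f y := hc y
  linarith [ciSup_le hp, le_ciInf lower]

end Periodic

theorem exists_int_norm_add_le {ι : Type*} [Fintype ι] (x : EuclideanSpace ℝ ι) :
    ∃ k : ι → ℤ, ‖x + WithLp.toLp 2 (fun i ↦ (k i : ℝ))‖ ≤ √(Fintype.card ι) / 2 := by
  refine ⟨fun i ↦ -round (x i), ?_⟩
  have coord_le (i : ι) : ‖x i + ((-round (x i) : ℤ) : ℝ)‖ ^ 2 ≤ (1 / 2) ^ 2 := by
    rw [Int.cast_neg, ← sub_eq_add_neg]
    gcongr
    exact abs_sub_round (x i)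
  refine le_of_sq_le_sq ?_ (by positivity)
  calc _ = ∑ i, ‖x i + ((-round (x i) : ℤ) : ℝ)‖ ^ 2 := EuclideanSpace.norm_sq_eq _
    _ ≤ ∑ _i : ι, (1 / 2 : ℝ) ^ 2 := Finset.sum_le_sum fun i _ ↦ coord_le i
    _ = (√(Fintype.card ι) / 2) ^ 2 := by
      rw [Finset.sum_const, Finset.card_univ, nsmul_eq_mul, div_pow √_,
        Real.sq_sqrt (by positivity)]
      ring

theorem stmt_14_general {ι : Type*} [Fintype ι] {μ : ℝ} (hμ : 0 ≤ μ)
    {φ : EuclideanSpace ℝ ι → ℝ} (hφ : StrongConvexOn univ (-μ) φ)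
    (hper : ∀ k : ι → ℤ, Periodic φ (WithLp.toLp 2 fun i ↦ (k i : ℝ))) :
    (⨆ x, φ x) - (⨅ x, φ x) ≤ μ * Fintype.card ι / 8 := by
  have covering (x : EuclideanSpace ℝ ι) :
      ∃ c, Periodic φ c ∧ ‖x + c‖ ≤ √(Fintype.card ι) / 2 := by
    obtain ⟨k, hk⟩ := exists_int_norm_add_le x
    exact ⟨_, hper k, hk⟩
  calc (⨆ x, φ x) - (⨅ x, φ x) ≤ μ / 2 * (√(Fintype.card ι) / 2) ^ 2 :=
        iSup_sub_iInf_le_of_strongConvexOn_of_periodic hμ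
          (continuous_of_strongConvexOn_univ hφ) hφ covering
    _ = μ * Fintype.card ι / 8 := by
      rw [div_pow, Real.sq_sqrt (by positivity)]
      ring

/-- Oscillation bound for a ℤⁿ-periodic C² function with Hessian
    bounded below by −μ·Id: sup φ − inf φ ≤ μ·n/8. -/
theorem stmt_14 (n : ℕ) (hn : 0 < n) (μ : ℝ) (hμ : 0 ≤ μ)
    (φ : EuclideanSpace ℝ (Fin n) → ℝ) (hφ : ContDiff ℝ 2 φ)
    (hper : ∀ (x : EuclideanSpace ℝ (Fin n)) (k : Fin n → ℤ),
      φ (x + (WithLp.equiv 2 (Fin n → ℝ)).symm (fun i => (k i : ℝ))) = φ x)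
    (hHess : ∀ (x v : EuclideanSpace ℝ (Fin n)),
      -μ * ‖v‖ ^ 2 ≤ iteratedFDeriv ℝ 2 φ x ![v, v]) :
    (⨆ x, φ x) - (⨅ x, φ x) ≤ μ * n / 8 := by
  have hconv : StrongConvexOn univ (-μ) φ :=
    strongConvexOn_univ_of_le_fderiv_fderiv (hφ.differentiable two_ne_zero)
      ((hφ.fderiv_right (m := 1) le_rfl).differentiable one_ne_zero)
      fun x v ↦ by simpa [iteratedFDeriv_two_apply] using hHess x v
  simpa using stmt_14_general hμ hconv fun k x ↦ hper x k
end
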